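/- Assume α_i + i/r > 0 for every i = 0,…,r−1 and no α_i is a negative integer. For u ∈ [0,1]^r let E_u(z) = exp(θ z u_0 u_1 ⋯ u_{r−1}). Then for every x ∈ ℂ∖{0}, E_μ(x) = c_μ ∫_{[0,1]^r} [ T_0 E_u(x) + Σ_{k=1}^{r−1} θ^{−k} T_k(L_{a_{k−1}} ∘ ⋯ ∘ L_{a_0} E_u)(x) ] w_μ(u) du, where the operators T_k and L_a act on the variable x. -/

import Mathlib

open Complex MeasureTheory Real Filter Topology

noncomputable section

/-- ω = exp(2πi/r) -/
def om (r : ℕ) : ℂ := Complex.exp (2 * Real.pi * Complex.I / r)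

/-- θ = exp(iπ/r) -/
def th (r : ℕ) : ℂ := Complex.exp (Real.pi * Complex.I / r)

/-- projector T_k -/
def Tk (r k : ℕ) (g : ℂ → ℂ) (x : ℂ) : ℂ :=
  (r : ℂ)⁻¹ * ∑ n ∈ Finset.range r, om r ^ (k * n) * g (om r ^ n * x)

/-- L_a f = f' + (a/x) f -/
def Lop (a : ℝ) (f : ℂ → ℂ) (x : ℂ) : ℂ := deriv f x + (a / x) * f x

/-- a_k = r α_k + k -/
def acoef (r : ℕ) (α : ℕ → ℝ) (k : ℕ) : ℝ := r * α k + k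

/-- Δ_μ = L_{a_{r-1}} ∘ ⋯ ∘ L_{a_0} -/
def Delta (r : ℕ) (α : ℕ → ℝ) (f : ℂ → ℂ) : ℂ → ℂ :=
  (List.range r).foldl (fun g i => Lop (acoef r α i) g) f

/-- D_μ -/
def Dop (r : ℕ) (α : ℕ → ℝ) (f : ℂ → ℂ) (x : ℂ) : ℂ :=
  deriv f x + (1 / x) * ∑ k ∈ Finset.range r, ((acoef r α k : ℝ) : ℂ) * Tk r k f x

/-- Pochhammer symbol (β)_n -/
def poch (β : ℝ) (n : ℕ) : ℝ := (ascPochhammer ℝ n).eval β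

/-- Bessel function of vector index -/
def jmu (r : ℕ) (α : ℕ → ℝ) (z : ℂ) : ℂ :=
  ∑' n : ℕ, (-1 : ℂ) ^ n * z ^ (n * r) /
    ((∏ i ∈ Finset.range r, ((poch (α i + 1) n : ℝ) : ℂ)) * (r : ℂ) ^ (n * r))

/-- r-Dunkl kernel -/
def Emu (r : ℕ) (α : ℕ → ℝ) (z : ℂ) : ℂ :=
  ∑ k ∈ Finset.range r, th r ^ (-(k : ℤ)) * (Dop r α)^[k] (jmu r α) z

/-- generalized cosine -/
def cosr (r : ℕ) (z : ℂ) : ℂ :=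
  ∑' n : ℕ, (-1 : ℂ) ^ n * z ^ (n * r) /
    ((∏ i ∈ Finset.range r, ((poch (1 - (i : ℝ) / r) n : ℝ) : ℂ)) * (r : ℂ) ^ (n * r))

/-- weight w_μ on [0,1]^r -/
def wmu (r : ℕ) (α : ℕ → ℝ) (u : Fin r → ℝ) : ℝ :=
  ∏ i : Fin r, (1 - u i ^ r) ^ (α i.1 + (i.1 : ℝ) / r - 1) * u i ^ (r - (i.1 + 1))

/-- constant c_μ -/
def cmu (r : ℕ) (α : ℕ → ℝ) : ℝ :=
  ∏ i ∈ Finset.range r,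
    r * Real.Gamma (α i + 1) / (Real.Gamma (α i + (i : ℝ) / r) * Real.Gamma (1 - (i : ℝ) / r))

/-- L_{a_{k-1}} ∘ ⋯ ∘ L_{a_0} -/
def Lcomp (r : ℕ) (α : ℕ → ℝ) (k : ℕ) (f : ℂ → ℂ) : ℂ → ℂ :=
  (List.range k).foldl (fun g i => Lop (acoef r α i) g) f

/-- r-Riemann–Liouville on the half line -/
def Rop (r : ℕ) (a : ℝ) (g : ℝ → ℂ) (x : ℝ) : ℂ :=
  ∫ t in (0:ℝ)..1, g (x * t) * (((1 - t ^ r) ^ (a - 1) : ℝ) : ℂ)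

/-- r-Riemann–Liouville along rays in ℂ -/
def RopC (r : ℕ) (a : ℝ) (f : ℂ → ℂ) (z : ℂ) : ℂ :=
  ∫ t in (0:ℝ)..1, f (z * t) * (((1 - t ^ r) ^ (a - 1) : ℝ) : ℂ)

/-- the operator M h = (1/(r x^{r-1})) h' -/
def Mop (r : ℕ) (h : ℝ → ℂ) (x : ℝ) : ℂ := ((1 / (r * x ^ (r - 1)) : ℝ) : ℂ) * deriv h x

/-- hermitian product ⟨f,g⟩_a -/
def inr (r : ℕ) (a : ℝ) (f g : ℂ → ℂ) : ℂ :=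
  ∫ t in Set.Ioi (0:ℝ),
    (∑ m ∈ Finset.range r, f (om r ^ m * t) * (starRingEnd ℂ) (g (om r ^ m * t))) *
      ((t ^ a : ℝ) : ℂ)

/-- transmutation operator V_μ -/
def Vmu (r : ℕ) (α : ℕ → ℝ) (h : ℂ → ℂ) (x : ℂ) : ℂ :=
  (cmu r α : ℂ) *
    ∫ u in Set.univ.pi (fun _ : Fin r => Set.Icc (0:ℝ) 1),
      (Tk r 0 (fun z => h (z * ∏ i, (u i : ℂ))) x +
        ∑ k ∈ Finset.Ico 1 r,
          th r ^ (-(k : ℤ)) * Tk r k (Lcomp r α k (fun z => h (z * ∏ i, (u i : ℂ)))) x) *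
        ((wmu r α u : ℝ) : ℂ)

/-- entire coefficient sequence -/
def Ent (c : ℕ → ℂ) : Prop := ∀ R : ℝ, 0 ≤ R → Summable (fun m => ‖c m‖ * R ^ m)

/-- power series -/
def PS (c : ℕ → ℂ) (z : ℂ) : ℂ := ∑' m, c m * z ^ m

lemma Ent.summ {c : ℕ → ℂ} (h : Ent c) (z : ℂ) : Summable (fun m => c m * z ^ m) := by
  apply Summable.of_norm
  simpa using h ‖z‖ (norm_nonneg _)

lemma Ent.mono {c d : ℕ → ℂ} (h : Ent c) (C : ℝ) (hd : ∀ m, ‖d m‖ ≤ C * 2 ^ m * ‖c m‖) :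
    Ent d := by
  intro R hR
  refine Summable.of_nonneg_of_le (fun m => by positivity) (fun m => ?_)
    ((h (2 * R) (by positivity)).mul_left C)
  calc ‖d m‖ * R ^ m ≤ (C * 2 ^ m * ‖c m‖) * R ^ m := by gcongr; exact hd m
    _ = _ := by rw [mul_pow]; ring

lemma Ent.lin {c : ℕ → ℂ} (h : Ent c) (b : ℂ) : Ent (fun m => ((m : ℂ) + b) * c m) := by
  refine h.mono (1 + ‖b‖) (fun m => ?_)
  rw [norm_mul]
  gcongr
  have h1 : ((m : ℝ)) ≤ 2 ^ m := by exact_mod_cast (Nat.lt_two_pow_self (n := m)).le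
  have h2 : (1 : ℝ) ≤ 2 ^ m := one_le_pow₀ (by norm_num)
  calc ‖(m : ℂ) + b‖ ≤ ‖(m : ℂ)‖ + ‖b‖ := norm_add_le _ _
    _ = m + ‖b‖ := by simp
    _ ≤ _ := by nlinarith [norm_nonneg b]

lemma PS_hasDeriv {c : ℕ → ℂ} (h : Ent c) (x : ℂ) :
    HasDerivAt (PS c) (∑' m, c m * ((m : ℂ) * x ^ (m - 1))) x := by
  unfold PS
  have hxm : x ∈ Metric.ball (0:ℂ) (‖x‖ + 1) := by rw [mem_ball_zero_iff]; linarith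
  have hu := (h.lin 0) (‖x‖ + 1) (by positivity)
  refine hasDerivAt_tsum_of_isPreconnected (t := Metric.ball 0 (‖x‖ + 1)) (y₀ := x) (y := x)
    (g := fun m z => c m * z ^ m) (g' := fun m z => c m * ((m : ℂ) * z ^ (m - 1))) hu
    Metric.isOpen_ball (convex_ball _ _).isPreconnected ?_ ?_ hxm (h.summ x) hxm
  · intro n y _
    exact (hasDerivAt_pow n y).const_mul (c n)
  · intro n y hy
    have hy' : ‖y‖ ≤ ‖x‖ + 1 := by simpa using (Metric.mem_ball.1 hy).le
    simp only [norm_mul, norm_pow, add_zero]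
    have h3 : ‖y‖ ^ (n - 1) ≤ (‖x‖ + 1) ^ n := by
      calc ‖y‖ ^ (n - 1) ≤ (‖x‖ + 1) ^ (n - 1) := by gcongr
        _ ≤ _ := pow_le_pow_right₀ (by linarith [norm_nonneg x]) (by omega)
    have := mul_le_mul_of_nonneg_left h3 (by positivity : 0 ≤ ‖c n‖ * ‖(n:ℂ)‖)
    linarith

lemma A0 {c : ℕ → ℂ} (h : Ent c) (k : ℕ) (F : ℂ → ℂ)
    (hF : ∀ z ≠ 0, F z = (z ^ k)⁻¹ * PS c z) (a : ℂ) (x : ℂ) (hx : x ≠ 0) :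
    deriv F x + a / x * F x =
      (x ^ (k + 1))⁻¹ * PS (fun m => ((m : ℂ) + (a - k)) * c m) x := by
  have hev : F =ᶠ[𝓝 x] fun z => (z ^ k)⁻¹ * PS c z := by
    filter_upwards [isOpen_ne.mem_nhds hx] with z hz using hF z hz
  have hd1 : HasDerivAt (fun z : ℂ => (z ^ k)⁻¹) (-(k : ℂ) * (x ^ (k + 1))⁻¹) x := by
    have := (hasDerivAt_pow k x).inv (pow_ne_zero k hx)
    refine this.congr_deriv ?_
    rcases k with _ | k
    · simp
    · simp only [Nat.add_sub_cancel]
      field_simp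
      ring
  have hd := hd1.mul (PS_hasDeriv h x)
  have hd' : deriv F x = _ := hev.deriv_eq.trans hd.deriv
  rw [hd', hF x hx]
  have e1 : PS (fun m => ((m : ℂ) + (a - k)) * c m) x =
      x * (∑' m, c m * ((m : ℂ) * x ^ (m - 1))) + (a - k) * PS c x := by
    unfold PS
    rw [← tsum_mul_left, ← tsum_mul_left, ← Summable.tsum_add]
    · congr 1
      ext m
      rcases m with _ | m
      · simp
      · simp only [Nat.add_sub_cancel]; push_cast; ring
    · have := ((h.lin 0).summ x)
      refine this.congr (fun m => ?_)
      rcases m with _ | m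
      · simp
      · simp only [Nat.add_sub_cancel]; push_cast; ring
    · exact (h.summ x).mul_left _
  rw [e1]
  field_simp
  ring

/-- multiplied coefficients -/
def Qc (r : ℕ) (α : ℕ → ℝ) (k : ℕ) (c : ℕ → ℂ) (m : ℕ) : ℂ :=
  (∏ i ∈ Finset.range k, ((m : ℂ) + r * α i)) * c m

lemma Qc_succ (r : ℕ) (α : ℕ → ℝ) (k : ℕ) (c : ℕ → ℂ) :
    Qc r α (k + 1) c = fun m : ℕ => ((m : ℂ) + ((acoef r α k : ℝ) - (k : ℂ))) * Qc r α k c m := by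
  ext m
  simp only [Qc, Finset.prod_range_succ, acoef]
  push_cast
  ring

lemma Qc_ent (r : ℕ) (α : ℕ → ℝ) (k : ℕ) {c : ℕ → ℂ} (h : Ent c) : Ent (Qc r α k c) := by
  induction k with
  | zero =>
    have : Qc r α 0 c = c := by ext m; simp [Qc]
    rwa [this]
  | succ k ih => rw [Qc_succ]; exact ih.lin _

lemma Lcomp_succ (r : ℕ) (α : ℕ → ℝ) (k : ℕ) (f : ℂ → ℂ) :
    Lcomp r α (k + 1) f = Lop (acoef r α k) (Lcomp r α k f) := by
  simp [Lcomp, List.range_succ]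

lemma Lcomp_PS (r : ℕ) (α : ℕ → ℝ) (k : ℕ) {c : ℕ → ℂ} (h : Ent c) :
    ∀ x ≠ 0, Lcomp r α k (PS c) x = (x ^ k)⁻¹ * PS (Qc r α k c) x := by
  induction k with
  | zero => intro x hx; simp [Lcomp, Qc, PS]
  | succ k ih =>
    intro x hx
    rw [Lcomp_succ, Lop, A0 (Qc_ent r α k h) k _ ih _ x hx, Qc_succ]

lemma om_prim (r : ℕ) (hr : r ≠ 0) : IsPrimitiveRoot (om r) r :=
  Complex.isPrimitiveRoot_exp r hr

lemma om_ne (r : ℕ) : om r ≠ 0 := Complex.exp_ne_zero _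

lemma orth (r : ℕ) (hr : r ≠ 0) (l : ℤ) :
    ∑ n ∈ Finset.range r, (om r ^ l) ^ n = if (r : ℤ) ∣ l then (r : ℂ) else 0 := by
  have hp := om_prim r hr
  split_ifs with hl
  · rw [(hp.zpow_eq_one_iff_dvd l).2 hl]; simp
  · have h1 : om r ^ l ≠ 1 := fun h => hl ((hp.zpow_eq_one_iff_dvd l).1 h)
    rw [geom_sum_eq h1]
    have : (om r ^ l) ^ r = 1 := by
      rw [← zpow_natCast, ← zpow_mul, mul_comm, zpow_mul, zpow_natCast, hp.pow_eq_one, one_zpow]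
    rw [this]; simp

lemma Tk_inv (r : ℕ) (hr : r ≠ 0) (j k : ℕ) (F g : ℂ → ℂ) (x : ℂ) (hx : x ≠ 0)
    (hF : ∀ z ≠ 0, F z = (z ^ k)⁻¹ * g z) (hg : ∀ n : ℕ, g (om r ^ n * x) = g x) :
    Tk r j F x = if (r : ℤ) ∣ (j : ℤ) - k then F x else 0 := by
  unfold Tk
  have hr' : (r : ℂ) ≠ 0 := by exact_mod_cast hr
  have : ∀ n ∈ Finset.range r, om r ^ (j * n) * F (om r ^ n * x) =
      (om r ^ ((j : ℤ) - k)) ^ n * F x := by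
    intro n _
    have ho := om_ne r
    rw [hF _ (mul_ne_zero (pow_ne_zero _ ho) hx), hF x hx, hg, zpow_sub₀ ho, zpow_natCast,
      zpow_natCast, div_pow, mul_pow, ← pow_mul, ← pow_mul, ← pow_mul, mul_comm n k]
    field_simp
  rw [Finset.sum_congr rfl this, ← Finset.sum_mul, orth r hr]
  split_ifs
  · field_simp
  · simp

lemma PS_inv (r : ℕ) (hr : r ≠ 0) (c : ℕ → ℂ) (hc : ∀ m, ¬ r ∣ m → c m = 0) (x : ℂ) (n : ℕ) :
    PS c (om r ^ n * x) = PS c x := by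
  unfold PS
  congr 1
  ext m
  by_cases hm : r ∣ m
  · obtain ⟨q, rfl⟩ := hm
    rw [mul_pow, ← pow_mul, mul_left_comm n r q, pow_mul, (om_prim r hr).pow_eq_one]
    simp
  · simp [hc m hm]

lemma Dop_PS (r : ℕ) (hr : r ≠ 0) (α : ℕ → ℝ) {c : ℕ → ℂ} (h : Ent c)
    (hc : ∀ m, ¬ r ∣ m → c m = 0) (k : ℕ) (hk : k ≤ r) :
    ∀ x ≠ 0, (Dop r α)^[k] (PS c) x = (x ^ k)⁻¹ * PS (Qc r α k c) x := by
  induction k with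
  | zero => intro x hx; simp [Qc, PS]
  | succ k ih =>
    intro x hx
    have ih' := ih (by omega)
    rw [Function.iterate_succ_apply']
    set F := (Dop r α)^[k] (PS c) with hFd
    have hs : ∑ j ∈ Finset.range r, ((acoef r α j : ℝ) : ℂ) * Tk r j F x =
        ((acoef r α k : ℝ) : ℂ) * F x := by
      rw [Finset.sum_eq_single k]
      · rw [Tk_inv r hr k k F _ x hx ih'
          (PS_inv r hr _ (fun m hm => by simp [Qc, hc m hm]) x)]
        simp
      · intro j hj hjk
        rw [Tk_inv r hr j k F _ x hx ih'
          (PS_inv r hr _ (fun m hm => by simp [Qc, hc m hm]) x), if_neg, mul_zero]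
        intro hd
        have hj' := Finset.mem_range.1 hj
        have := Int.eq_zero_of_abs_lt_dvd hd (by rw [abs_lt]; constructor <;> omega)
        omega
      · intro hk'; simp at hk'; omega
    rw [Dop, hs, ← mul_assoc, one_div_mul_eq_div, A0 (Qc_ent r α k h) k _ ih' _ x hx, Qc_succ]

lemma Tk_PS (r : ℕ) (hr : r ≠ 0) (k : ℕ) {c : ℕ → ℂ} (h : Ent c) (F : ℂ → ℂ)
    (hF : ∀ z ≠ 0, F z = (z ^ k)⁻¹ * PS c z) (x : ℂ) (hx : x ≠ 0) :
    Tk r k F x = (x ^ k)⁻¹ * PS (fun m => if r ∣ m then c m else 0) x := by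
  unfold Tk
  have hr' : (r : ℂ) ≠ 0 := by exact_mod_cast hr
  have ho := om_ne r
  have : ∀ n ∈ Finset.range r, om r ^ (k * n) * F (om r ^ n * x) =
      (x ^ k)⁻¹ * ∑' m, c m * x ^ m * (om r ^ (m : ℤ)) ^ n := by
    intro n _
    rw [hF _ (mul_ne_zero (pow_ne_zero _ ho) hx), mul_pow, ← pow_mul, mul_comm n k, mul_inv,
      ← mul_assoc, ← mul_assoc, mul_inv_cancel₀ (pow_ne_zero _ ho), one_mul]
    unfold PS
    congr 2
    ext m
    rw [mul_pow, zpow_natCast, ← pow_mul, ← pow_mul, mul_comm n m]; ring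
  rw [Finset.sum_congr rfl this, ← Finset.mul_sum, ← Summable.tsum_finsetSum]
  · rw [mul_left_comm]
    congr 1
    unfold PS
    rw [← tsum_mul_left]
    congr 1
    ext m
    rw [← Finset.mul_sum, orth r hr]
    beta_reduce
    by_cases hm : r ∣ m
    · rw [if_pos (by exact_mod_cast hm), if_pos hm]; field_simp
    · rw [if_neg (by exact_mod_cast hm), if_neg hm]; simp
  · intro n _
    refine (h.summ (om r ^ n * x)).congr (fun m => ?_)
    rw [mul_pow, zpow_natCast, ← pow_mul, ← pow_mul, mul_comm n m]; ring

lemma beta_int (a s : ℝ) (ha : 0 < a) (hs : 0 < s) :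
    IntegrableOn (fun t : ℝ => t ^ (a - 1) * (1 - t) ^ (s - 1)) (Set.Ioc 0 1) ∧
    ∫ t in Set.Ioc (0:ℝ) 1, t ^ (a - 1) * (1 - t) ^ (s - 1) =
      Real.Gamma a * Real.Gamma s / Real.Gamma (a + s) := by
  have hc := Complex.betaIntegral_convergent (u := a) (v := s) (by simpa) (by simpa)
  rw [intervalIntegrable_iff_integrableOn_Ioc_of_le zero_le_one] at hc
  have heq : ∀ t ∈ Set.Ioc (0:ℝ) 1, (t : ℂ) ^ ((a : ℂ) - 1) * (1 - (t : ℂ)) ^ ((s : ℂ) - 1) =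
      ((t ^ (a - 1) * (1 - t) ^ (s - 1) : ℝ) : ℂ) := by
    intro t ht
    rw [Complex.ofReal_mul, Complex.ofReal_cpow ht.1.le, Complex.ofReal_cpow (by linarith [ht.2])]
    push_cast
    rfl
  have hc' := hc.congr_fun heq measurableSet_Ioc
  constructor
  · simpa using! hc'.re
  · have h1 := Complex.betaIntegral_eq_Gamma_mul_div a s (by simpa) (by simpa)
    rw [Complex.betaIntegral, intervalIntegral.integral_of_le zero_le_one,
      setIntegral_congr_fun measurableSet_Ioc heq, integral_complex_ofReal, ← Complex.ofReal_add,
      Complex.Gamma_ofReal, Complex.Gamma_ofReal, Complex.Gamma_ofReal] at h1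
    exact_mod_cast h1

lemma mom1 (r i n : ℕ) (hi : i < r) (s : ℝ) (hs : 0 < s) :
    IntegrableOn (fun u : ℝ => u ^ n * ((1 - u ^ r) ^ (s - 1) * u ^ (r - (i + 1)))) (Set.Icc 0 1) ∧
    ∫ u in Set.Icc (0:ℝ) 1, u ^ n * ((1 - u ^ r) ^ (s - 1) * u ^ (r - (i + 1))) =
      (r : ℝ)⁻¹ * (Real.Gamma ((n + r - i) / r) * Real.Gamma s /
        Real.Gamma ((n + r - i) / r + s)) := by
  have hr : (0 : ℝ) < r := by exact_mod_cast (by omega : 0 < r)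
  have hir : (i : ℝ) < r := by exact_mod_cast hi
  set a : ℝ := (n + r - i) / r with had
  have ha : 0 < a := div_pos (by have := Nat.cast_nonneg (α := ℝ) n; linarith) hr
  obtain ⟨hI, hV⟩ := beta_int a s ha hs
  set G : ℝ → ℝ := (Set.Ioc (0:ℝ) 1).indicator (fun t : ℝ => t ^ (a - 1) * (1 - t) ^ (s - 1)) with hG
  have hGi : IntegrableOn G (Set.Ioi 0) :=
    ((integrable_indicator_iff measurableSet_Ioc).2 hI).integrableOn
  have hsub : Set.Ioi (0:ℝ) ∩ Set.Ioc 0 1 = Set.Ioc 0 1 := by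
    ext; simp
  have hGv : ∫ t in Set.Ioi (0:ℝ), G t = Real.Gamma a * Real.Gamma s / Real.Gamma (a + s) := by
    rw [hG, setIntegral_indicator measurableSet_Ioc, hsub, hV]
  have h2 := (integrableOn_Ioi_comp_rpow_iff' G hr.ne').2 hGi
  have h3 := integral_comp_rpow_Ioi_of_pos (g := G) hr
  have key : ∀ u ∈ Set.Ioi (0:ℝ), u ^ ((r:ℝ) - 1) • G (u ^ (r:ℝ)) =
      (Set.Ioc (0:ℝ) 1).indicator
        (fun u : ℝ => u ^ n * ((1 - u ^ r) ^ (s - 1) * u ^ (r - (i + 1)))) u := by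
    intro u hu
    have hu0 : (0:ℝ) < u := hu
    by_cases h1 : u ≤ 1
    · have hm : u ∈ Set.Ioc (0:ℝ) 1 := ⟨hu0, h1⟩
      have hm' : u ^ (r:ℝ) ∈ Set.Ioc (0:ℝ) 1 :=
        ⟨Real.rpow_pos_of_pos hu0 _, Real.rpow_le_one hu0.le h1 hr.le⟩
      rw [hG, Set.indicator_of_mem hm', Set.indicator_of_mem hm, smul_eq_mul, ← Real.rpow_mul hu0.le,
        ← mul_assoc, ← Real.rpow_add hu0, Real.rpow_natCast]
      have : (r:ℝ) - 1 + r * (a - 1) = ((n + (r - (i + 1)) : ℕ) : ℝ) := by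
        rw [had]; push_cast [Nat.cast_sub (by omega : i + 1 ≤ r)]; field_simp; ring
      rw [this, Real.rpow_natCast, pow_add]; ring
    · have hm : u ∉ Set.Ioc (0:ℝ) 1 := fun h => h1 h.2
      have hm' : u ^ (r:ℝ) ∉ Set.Ioc (0:ℝ) 1 := fun h => by
        have := Real.one_lt_rpow (not_le.1 h1) hr
        linarith [h.2]
      rw [hG, Set.indicator_of_notMem hm', Set.indicator_of_notMem hm, smul_zero]
  constructor
  · rw [integrableOn_Icc_iff_integrableOn_Ioc]
    have h4 := h2.congr_fun key measurableSet_Ioi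
    have h5 := h4.mono_set (Set.Ioc_subset_Ioi_self : Set.Ioc (0:ℝ) 1 ⊆ _)
    exact h5.congr_fun (fun u hu => by rw [Set.indicator_of_mem hu]) measurableSet_Ioc
  · rw [integral_Icc_eq_integral_Ioc, ← hGv, ← h3]
    simp_rw [mul_smul]
    rw [integral_smul, smul_eq_mul, inv_mul_cancel_left₀ hr.ne',
      setIntegral_congr_fun measurableSet_Ioi key, setIntegral_indicator measurableSet_Ioc, hsub]

lemma wmu_prod (r : ℕ) (α : ℕ → ℝ) (m : ℕ) (u : Fin r → ℝ) :
    (∏ i, u i) ^ m * wmu r α u = ∏ i : Fin r, (u i ^ m *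
      ((1 - u i ^ r) ^ (α i.1 + (i.1 : ℝ) / r - 1) * u i ^ (r - (i.1 + 1)))) := by
  rw [wmu, ← Finset.prod_pow, ← Finset.prod_mul_distrib]

/-- the cube -/
abbrev cube (r : ℕ) : Set (Fin r → ℝ) := Set.univ.pi (fun _ : Fin r => Set.Icc (0:ℝ) 1)

lemma mom (r : ℕ) (α : ℕ → ℝ) (hpos : ∀ i < r, 0 < α i + (i : ℝ) / r) (m : ℕ) :
    IntegrableOn (fun u : Fin r → ℝ => (∏ i, u i) ^ m * wmu r α u) (cube r) ∧
    ∫ u in cube r, (∏ i, u i) ^ m * wmu r α u =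
      ∏ i ∈ Finset.range r, ((r : ℝ)⁻¹ * (Real.Gamma ((m + r - i) / r) *
        Real.Gamma (α i + (i : ℝ) / r) /
        Real.Gamma ((m + r - i) / r + (α i + (i : ℝ) / r)))) := by
  simp_rw [wmu_prod]
  unfold IntegrableOn cube
  rw [volume_pi, Measure.restrict_pi_pi]
  constructor
  · exact Integrable.fintype_prod (f := fun (i : Fin r) (x : ℝ) => x ^ m *
      ((1 - x ^ r) ^ (α i.1 + (i.1 : ℝ) / r - 1) * x ^ (r - (i.1 + 1))))
      (fun i => (mom1 r i m i.2 _ (hpos i i.2)).1)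
  · rw [integral_fintype_prod_eq_prod (fun (i : Fin r) (x : ℝ) => x ^ m *
      ((1 - x ^ r) ^ (α i.1 + (i.1 : ℝ) / r - 1) * x ^ (r - (i.1 + 1))))]
    rw [← Fin.prod_univ_eq_prod_range (fun i => (r : ℝ)⁻¹ * (Real.Gamma ((m + r - i) / r) *
        Real.Gamma (α i + (i : ℝ) / r) /
        Real.Gamma ((m + r - i) / r + (α i + (i : ℝ) / r)))) r]
    exact Finset.prod_congr rfl (fun i _ => (mom1 r i m i.2 _ (hpos i i.2)).2)

lemma poch_Gamma (β : ℝ) (hβ : 0 < β) (n : ℕ) :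
    Real.Gamma (β + n) = poch β n * Real.Gamma β := by
  unfold poch
  induction n with
  | zero => simp
  | succ n ih =>
    rw [ascPochhammer_succ_eval]
    push_cast
    rw [← add_assoc, Real.Gamma_add_one (by positivity), ih]; ring

lemma poch_pos (β : ℝ) (hβ : 0 < β) (n : ℕ) : 0 < poch β n := ascPochhammer_pos n β hβ

lemma prod_poch (r : ℕ) (hr : r ≠ 0) (n : ℕ) :
    ∏ i ∈ Finset.range r, poch (1 - (i : ℝ) / r) n = ((n * r).factorial : ℝ) / r ^ (n * r) := by
  have hr' : (r : ℝ) ≠ 0 := by exact_mod_cast hr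
  induction n with
  | zero => simp [poch]
  | succ n ih =>
    have h1 : ∀ i ∈ Finset.range r, poch (1 - (i : ℝ) / r) (n + 1) =
        poch (1 - (i : ℝ) / r) n * ((((n + 1) * r - i : ℕ) : ℝ) / r) := by
      intro i hi
      have hi' := Finset.mem_range.1 hi
      have : i ≤ (n + 1) * r := by nlinarith
      unfold poch
      rw [ascPochhammer_succ_eval, Nat.cast_sub this]
      push_cast
      field_simp
      ring
    rw [Finset.prod_congr rfl h1, Finset.prod_mul_distrib, ih, Finset.prod_div_distrib,
      Finset.prod_const, Finset.card_range, ← Nat.cast_prod, ← Nat.descFactorial_eq_prod_range]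
    have h2 := Nat.factorial_mul_descFactorial (n := (n + 1) * r) (k := r) (by nlinarith)
    have h3 : (n + 1) * r - r = n * r := by rw [add_mul, one_mul, Nat.add_sub_cancel]
    rw [h3] at h2
    rw [← h2]
    push_cast
    rw [add_mul, one_mul, pow_add]
    field_simp

lemma cmom (r : ℕ) (hr : 2 ≤ r) (α : ℕ → ℝ) (hpos : ∀ i < r, 0 < α i + (i : ℝ) / r) (n : ℕ) :
    cmu r α * ∫ u in cube r, (∏ i, u i) ^ (n * r) * wmu r α u =
      ((n * r).factorial : ℝ) / ((∏ i ∈ Finset.range r, poch (α i + 1) n) * r ^ (n * r)) := by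
  have hr0 : (0:ℝ) < r := by exact_mod_cast (by omega : 0 < r)
  rw [(mom r α hpos _).2, cmu, ← Finset.prod_mul_distrib]
  have h1 : ∀ i ∈ Finset.range r, (r * Real.Gamma (α i + 1) / (Real.Gamma (α i + (i : ℝ) / r) *
        Real.Gamma (1 - (i : ℝ) / r))) * ((r : ℝ)⁻¹ * (Real.Gamma (((n * r : ℕ) + r - i) / r) *
        Real.Gamma (α i + (i : ℝ) / r) /
        Real.Gamma (((n * r : ℕ) + r - i) / r + (α i + (i : ℝ) / r)))) =
      poch (1 - (i : ℝ) / r) n / poch (α i + 1) n := by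
    intro i hi
    have hi' := Finset.mem_range.1 hi
    have hir : (i : ℝ) / r < 1 := by rw [div_lt_one hr0]; exact_mod_cast hi'
    have hp := hpos i hi'
    have e1 : (((n * r : ℕ) : ℝ) + r - i) / r = (1 - (i : ℝ) / r) + n := by
      push_cast; field_simp; ring
    have e2 : (1 - (i : ℝ) / r) + n + (α i + (i : ℝ) / r) = (α i + 1) + n := by ring
    rw [e1, e2, poch_Gamma _ (by linarith), poch_Gamma _ (by linarith)]
    have g1 := (Real.Gamma_pos_of_pos hp).ne'
    have g2 := (Real.Gamma_pos_of_pos (by linarith : 0 < 1 - (i : ℝ) / r)).ne'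
    have g3 := (Real.Gamma_pos_of_pos (by linarith : 0 < α i + 1)).ne'
    have g4 := (poch_pos (α i + 1) (by linarith) n).ne'
    generalize Real.Gamma (α i + (i : ℝ) / r) = A at *
    generalize Real.Gamma (1 - (i : ℝ) / r) = B at *
    generalize Real.Gamma (α i + 1) = C at *
    generalize poch (α i + 1) n = D at *
    field_simp
  rw [Finset.prod_congr rfl h1, Finset.prod_div_distrib, prod_poch r (by omega), div_div,
    mul_comm (_ ^ _)]

lemma wmu_nonneg (r : ℕ) (α : ℕ → ℝ) (u : Fin r → ℝ) (hu : u ∈ cube r) : 0 ≤ wmu r α u := by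
  refine Finset.prod_nonneg (fun i _ => ?_)
  have hi := hu i (Set.mem_univ i)
  have : u i ^ r ≤ 1 := pow_le_one₀ hi.1 hi.2
  exact mul_nonneg (Real.rpow_nonneg (by linarith) _) (pow_nonneg hi.1 _)

lemma mom_bd (r : ℕ) (α : ℕ → ℝ) (hpos : ∀ i < r, 0 < α i + (i : ℝ) / r) (m : ℕ) :
    0 ≤ ∫ u in cube r, (∏ i, u i) ^ m * wmu r α u ∧
    ∫ u in cube r, (∏ i, u i) ^ m * wmu r α u ≤ ∫ u in cube r, (∏ i, u i) ^ 0 * wmu r α u := by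
  have hm : MeasurableSet (cube r) := MeasurableSet.univ_pi (fun _ => measurableSet_Icc)
  constructor
  · exact setIntegral_nonneg hm (fun u hu => mul_nonneg (pow_nonneg
      (Finset.prod_nonneg fun i _ => (hu i (Set.mem_univ i)).1) _) (wmu_nonneg r α u hu))
  · refine setIntegral_mono_on (mom r α hpos m).1 (mom r α hpos 0).1 hm (fun u hu => ?_)
    refine mul_le_mul_of_nonneg_right ?_ (wmu_nonneg r α u hu)
    rw [pow_zero]
    exact pow_le_one₀ (Finset.prod_nonneg fun i _ => (hu i (Set.mem_univ i)).1)
      (Finset.prod_le_one (fun i _ => (hu i (Set.mem_univ i)).1)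
        (fun i _ => (hu i (Set.mem_univ i)).2))

/-- filtered exponential coefficients -/
def ec (r : ℕ) (m : ℕ) : ℂ := if r ∣ m then th r ^ m / (m.factorial : ℂ) else 0

/-- total coefficient -/
def Bc (r : ℕ) (α : ℕ → ℝ) (x : ℂ) (m : ℕ) : ℂ :=
  ∑ k ∈ Finset.range r, th r ^ (-(k : ℤ)) * ((x ^ k)⁻¹ * (Qc r α k (ec r) m * x ^ m))

lemma ent_exp (y : ℂ) : Ent (fun m => y ^ m / (m.factorial : ℂ)) := by
  intro R hR
  refine (Real.summable_pow_div_factorial (‖y‖ * R)).congr (fun m => ?_)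
  simp [mul_pow]; ring

lemma ent_ec (r : ℕ) : Ent (ec r) := by
  refine (ent_exp (th r)).mono 1 (fun m => ?_)
  have h2 : (1 : ℝ) ≤ 2 ^ m := one_le_pow₀ (by norm_num)
  unfold ec
  split_ifs
  · nlinarith [norm_nonneg (th r ^ m / (m.factorial : ℂ))]
  · simp only [norm_zero]; positivity

lemma Bc_summ (r : ℕ) (α : ℕ → ℝ) (x : ℂ) : Summable (fun m => ‖Bc r α x m‖) := by
  unfold Bc
  refine Summable.of_nonneg_of_le (fun m => norm_nonneg _) (fun m => norm_sum_le _ _) ?_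
  refine summable_sum (fun k _ => ?_)
  have := (Qc_ent r α k (ent_ec r)) ‖x‖ (norm_nonneg _)
  simp only [norm_mul, norm_pow]
  exact (this.mul_left _).mul_left _

lemma comb (r : ℕ) (α : ℕ → ℝ) (x : ℂ) (v : ℕ → ℂ) (c : ℕ → ℂ) (hc : Ent c)
    (hcv : ∀ m, c m = ec r m * v m) :
    ∑ k ∈ Finset.range r, th r ^ (-(k : ℤ)) * ((x ^ k)⁻¹ * PS (Qc r α k c) x) =
      ∑' m, Bc r α x m * v m := by
  unfold PS
  simp_rw [← tsum_mul_left]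
  rw [← Summable.tsum_finsetSum]
  · congr 1
    ext m
    unfold Bc
    rw [Finset.sum_mul]
    refine Finset.sum_congr rfl (fun k _ => ?_)
    simp only [Qc, hcv]
    ring
  · intro k _
    exact (((Qc_ent r α k hc).summ x).mul_left _).mul_left _

lemma th_pow (r : ℕ) (hr : r ≠ 0) : th r ^ r = -1 := by
  have hr' : (r : ℂ) ≠ 0 := by exact_mod_cast hr
  rw [th, ← Complex.exp_nat_mul, mul_div_cancel₀ _ hr', Complex.exp_pi_mul_I]

/-- coefficients of j -/
def dc (r : ℕ) (α : ℕ → ℝ) (m : ℕ) : ℂ :=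
  ec r m * ((cmu r α * ∫ u in cube r, (∏ i, u i) ^ m * wmu r α u : ℝ) : ℂ)

lemma ent_dc (r : ℕ) (α : ℕ → ℝ) (hpos : ∀ i < r, 0 < α i + (i : ℝ) / r) : Ent (dc r α) := by
  refine (ent_ec r).mono (|cmu r α| * ∫ u in cube r, (∏ i, u i) ^ 0 * wmu r α u) (fun m => ?_)
  have h2 : (1 : ℝ) ≤ 2 ^ m := one_le_pow₀ (by norm_num)
  obtain ⟨h0, h1⟩ := mom_bd r α hpos m
  rw [dc, norm_mul, Complex.norm_real, Real.norm_eq_abs, abs_mul, abs_of_nonneg h0, mul_comm]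
  refine mul_le_mul_of_nonneg_right ?_ (norm_nonneg _)
  set I0 := ∫ u in cube r, (∏ i, u i) ^ 0 * wmu r α u
  have h3 := mul_le_mul_of_nonneg_left h1 (abs_nonneg (cmu r α))
  have h4 : 0 ≤ |cmu r α| * I0 := mul_nonneg (abs_nonneg _) (h0.trans h1)
  nlinarith

lemma jmu_PS (r : ℕ) (hr : 2 ≤ r) (α : ℕ → ℝ) (hpos : ∀ i < r, 0 < α i + (i : ℝ) / r) :
    jmu r α = PS (dc r α) := by
  ext z
  unfold jmu PS
  have hinj : Function.Injective (fun n : ℕ => n * r) := fun a b h =>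
    Nat.eq_of_mul_eq_mul_right (by omega) h
  rw [← hinj.tsum_eq (f := fun m => dc r α m * z ^ m)]
  · congr 1
    ext n
    have h1 := cmom r hr α hpos n
    simp only [dc, h1, ec, dvd_mul_left, if_true]
    rw [mul_comm n r, pow_mul (th r), th_pow r (by omega)]
    have hf : ((r * n).factorial : ℂ) ≠ 0 := by exact_mod_cast Nat.factorial_ne_zero _
    push_cast
    field_simp
  · intro m hm
    by_contra hcon
    apply hm
    have : ¬ r ∣ m := fun ⟨q, hq⟩ => hcon ⟨q, by simp [hq, mul_comm]⟩
    simp [dc, ec, this]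

lemma Emu_eq (r : ℕ) (hr : 2 ≤ r) (α : ℕ → ℝ) (hpos : ∀ i < r, 0 < α i + (i : ℝ) / r)
    (x : ℂ) (hx : x ≠ 0) :
    Emu r α x = ∑' m, Bc r α x m *
      ((cmu r α * ∫ u in cube r, (∏ i, u i) ^ m * wmu r α u : ℝ) : ℂ) := by
  rw [← comb r α x _ (dc r α) (ent_dc r α hpos) (fun m => rfl), Emu]
  refine Finset.sum_congr rfl (fun k hk => ?_)
  rw [jmu_PS r hr α hpos, Dop_PS r (by omega) α (ent_dc r α hpos)
    (fun m hm => by simp [dc, ec, hm]) k (Finset.mem_range.1 hk).le x hx]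

lemma integrand_eq (r : ℕ) (hr : 2 ≤ r) (α : ℕ → ℝ) (x : ℂ) (hx : x ≠ 0) (U : ℂ) :
    (Tk r 0 (fun z => Complex.exp (th r * z * U)) x +
            ∑ k ∈ Finset.Ico 1 r,
              th r ^ (-(k : ℤ)) *
                Tk r k (Lcomp r α k (fun z => Complex.exp (th r * z * U))) x) =
      ∑' m, Bc r α x m * U ^ m := by
  set f : ℂ → ℂ := fun z => Complex.exp (th r * z * U) with hf
  have hfPS : f = PS (fun m => (th r * U) ^ m / (m.factorial : ℂ)) := by
    ext z
    simp only [hf, PS]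
    rw [Complex.exp_eq_exp_ℂ, NormedSpace.exp_eq_tsum_div]
    refine tsum_congr (fun m => ?_)
    rw [mul_right_comm, mul_pow _ z]
    ring
  have hE := ent_exp (th r * U)
  have hE2 : Ent (fun m => ec r m * U ^ m) := by
    refine hE.mono 1 (fun m => ?_)
    have h2 : (1 : ℝ) ≤ 2 ^ m := one_le_pow₀ (by norm_num)
    unfold ec
    split_ifs
    · rw [div_mul_eq_mul_div, ← mul_pow]
      nlinarith [norm_nonneg ((th r * U) ^ m / (m.factorial : ℂ))]
    · simp only [zero_mul, norm_zero]; positivity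
  rw [← comb r α x _ _ hE2 (fun m => rfl)]
  have h0 : Tk r 0 f x = th r ^ (-((0:ℕ) : ℤ)) * Tk r 0 (Lcomp r α 0 f) x := by
    simp [Lcomp]
  rw [h0, Finset.range_eq_Ico, Finset.sum_eq_sum_Ico_succ_bot (by omega : 0 < r)]
  have hk : ∀ k, Tk r k (Lcomp r α k f) x =
      (x ^ k)⁻¹ * PS (Qc r α k (fun m => ec r m * U ^ m)) x := by
    intro k
    rw [Tk_PS r (by omega) k (Qc_ent r α k hE) _ (by rw [hfPS]; exact Lcomp_PS r α k hE) x hx]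
    congr 2
    ext m
    by_cases hm : r ∣ m
    · simp only [Qc, ec, hm, if_true]; rw [mul_pow]; ring
    · simp [Qc, ec, hm]
  simp only [hk, zero_add]

theorem stmt7 (r : ℕ) (hr : 2 ≤ r) (α : ℕ → ℝ)
    (hα : ∀ i < r, ∀ n : ℕ, α i ≠ -((n : ℝ) + 1))
    (hpos : ∀ i < r, 0 < α i + (i : ℝ) / r) :
    ∀ x : ℂ, x ≠ 0 →
      Emu r α x = (cmu r α : ℂ) *
        ∫ u in Set.univ.pi (fun _ : Fin r => Set.Icc (0:ℝ) 1),
          (Tk r 0 (fun z => Complex.exp (th r * z * ∏ i, (u i : ℂ))) x +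
            ∑ k ∈ Finset.Ico 1 r,
              th r ^ (-(k : ℤ)) *
                Tk r k (Lcomp r α k (fun z => Complex.exp (th r * z * ∏ i, (u i : ℂ)))) x) *
            ((wmu r α u : ℝ) : ℂ) := by
  intro x hx
  have hm : MeasurableSet (cube r) := MeasurableSet.univ_pi (fun _ => measurableSet_Icc)
  simp_rw [integrand_eq r hr α x hx]
  rw [Emu_eq r hr α hpos x hx]
  have hs : ∀ u : Fin r → ℝ, (∑' m, Bc r α x m * (∏ i, (u i : ℂ)) ^ m) * ((wmu r α u : ℝ) : ℂ) =
      ∑' m, Bc r α x m * (((∏ i, u i) ^ m * wmu r α u : ℝ) : ℂ) := by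
    intro u
    rw [← tsum_mul_right]
    congr 1
    ext m
    push_cast
    ring
  simp_rw [hs]
  have hint : ∀ m, Integrable (fun u : Fin r → ℝ =>
      Bc r α x m * (((∏ i, u i) ^ m * wmu r α u : ℝ) : ℂ)) (volume.restrict (cube r)) :=
    fun m => ((mom r α hpos m).1.ofReal).const_mul _
  have hnorm : ∀ m, ∫ u in cube r, ‖Bc r α x m * (((∏ i, u i) ^ m * wmu r α u : ℝ) : ℂ)‖ =
      ‖Bc r α x m‖ * ∫ u in cube r, (∏ i, u i) ^ m * wmu r α u := by
    intro m
    rw [← integral_const_mul]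
    refine setIntegral_congr_fun hm (fun u hu => ?_)
    simp only [norm_mul, Complex.norm_real, Real.norm_eq_abs]
    rw [← abs_mul, abs_of_nonneg (mul_nonneg (pow_nonneg
      (Finset.prod_nonneg fun i _ => (hu i (Set.mem_univ i)).1) _) (wmu_nonneg r α u hu))]
  have hsum : Summable fun m =>
      ∫ u in cube r, ‖Bc r α x m * (((∏ i, u i) ^ m * wmu r α u : ℝ) : ℂ)‖ := by
    simp_rw [hnorm]
    refine Summable.of_nonneg_of_le (fun m => mul_nonneg (norm_nonneg _) (mom_bd r α hpos m).1)
      (fun m => mul_le_mul_of_nonneg_left (mom_bd r α hpos m).2 (norm_nonneg _))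
      ((Bc_summ r α x).mul_right _)
  have hfin := (hasSum_integral_of_summable_integral_norm hint hsum).tsum_eq
  rw [← hfin, ← tsum_mul_left]
  congr 1
  ext m
  rw [integral_const_mul, integral_complex_ofReal]
  push_cast
  ring
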